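/- Under assumptions (H1)–(H5), the family of value functions (V^ε)_{ε>0} is locally equibounded: for every bounded set C ⊆ ℝ^N × ℝ^M × [0,∞) there exists a constant M > 0 such that |V^ε(x,y,t)| ≤ M for every ε > 0 and every (x,y,t) ∈ C. -/

import Mathlib

open Set MeasureTheory Metric Filter
open scoped RealInnerProductSpace Topology

noncomputable section

/-- `ℝ^n` with the Euclidean structure. -/
abbrev Euc (n : ℕ) : Type := EuclideanSpace ℝ (Fin n)

/-- A control: a measurable map with values in the control set `A`. -/
def IsControl {k : ℕ} (A : Set (Euc k)) (α : ℝ → Euc k) : Prop :=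
  Measurable α ∧ ∀ t, α t ∈ A

/-- `(ξ, η)` is a trajectory of the controlled dynamics `(CD_ε)` for the control `α`:
this is the integral form, equivalent to `(ξ, η)` being locally absolutely continuous
with `ξ' = ε f(ξ, η, α)` and `η' = g(ξ, η, α)` a.e. on `[0, ∞)`. -/
def IsTrajectory {N M k : ℕ}
    (f : Euc N → Euc M → Euc k → Euc N) (g : Euc N → Euc M → Euc k → Euc M)
    (ε : ℝ) (α : ℝ → Euc k) (ξ : ℝ → Euc N) (η : ℝ → Euc M) : Prop :=
  (∀ t, 0 ≤ t → IntervalIntegrable (fun s => f (ξ s) (η s) (α s)) volume 0 t) ∧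
  (∀ t, 0 ≤ t → IntervalIntegrable (fun s => g (ξ s) (η s) (α s)) volume 0 t) ∧
  (∀ t, 0 ≤ t → ξ t = ξ 0 + ε • ∫ s in (0:ℝ)..t, f (ξ s) (η s) (α s)) ∧
  (∀ t, 0 ≤ t → η t = η 0 + ∫ s in (0:ℝ)..t, g (ξ s) (η s) (α s))

/-- The value function `V^ε(x, y, t)` of the singularly perturbed optimal control problem. -/
def valueFun {N M k : ℕ} (A : Set (Euc k))
    (f : Euc N → Euc M → Euc k → Euc N) (g : Euc N → Euc M → Euc k → Euc M)
    (ℓ : Euc N → Euc M → Euc k → ℝ) (u0 : Euc N → Euc M → ℝ)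
    (ε : ℝ) (x : Euc N) (y : Euc M) (t : ℝ) : ℝ :=
  sInf { v : ℝ | ∃ (α : ℝ → Euc k) (ξ : ℝ → Euc N) (η : ℝ → Euc M),
    IsControl A α ∧ IsTrajectory f g ε α ξ η ∧ ξ 0 = x ∧ η 0 = y ∧
    IntervalIntegrable (fun s => ℓ (ξ s) (η s) (α s)) volume 0 (t / ε) ∧
    v = ε * (∫ s in (0:ℝ)..(t / ε), ℓ (ξ s) (η s) (α s)) + u0 (ξ (t / ε)) (η (t / ε)) }

/-- The Hamiltonian `H(x,y,p,q) = max_{a ∈ A} { -p·f(x,y,a) - q·g(x,y,a) - ℓ(x,y,a) }`. -/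
def Ham {N M k : ℕ} (A : Set (Euc k))
    (f : Euc N → Euc M → Euc k → Euc N) (g : Euc N → Euc M → Euc k → Euc M)
    (ℓ : Euc N → Euc M → Euc k → ℝ)
    (x : Euc N) (y : Euc M) (p : Euc N) (q : Euc M) : ℝ :=
  sSup ((fun a => -⟪p, f x y a⟫ - ⟪q, g x y a⟫ - ℓ x y a) '' A)

/-- Viscosity subsolution of the stationary equation `G(y, Du) = b` on `Ω`. -/
def IsVSubOn {m : ℕ} (G : Euc m → Euc m → ℝ) (b : ℝ) (Ω : Set (Euc m)) (u : Euc m → ℝ) : Prop :=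
  UpperSemicontinuousOn u Ω ∧
  ∀ ψ : Euc m → ℝ, ContDiff ℝ 1 ψ → ∀ y ∈ Ω,
    IsLocalMaxOn (fun z => u z - ψ z) Ω y → G y (gradient ψ y) ≤ b

/-- Viscosity supersolution of the stationary equation `G(y, Du) = b` on `Ω`. -/
def IsVSupOn {m : ℕ} (G : Euc m → Euc m → ℝ) (b : ℝ) (Ω : Set (Euc m)) (u : Euc m → ℝ) : Prop :=
  LowerSemicontinuousOn u Ω ∧
  ∀ ψ : Euc m → ℝ, ContDiff ℝ 1 ψ → ∀ y ∈ Ω,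
    IsLocalMinOn (fun z => u z - ψ z) Ω y → b ≤ G y (gradient ψ y)

/-- The set of levels `b` for which `F(y, Du) = b` has a viscosity subsolution on `ℝ^m`. -/
def subsolLevels {m : ℕ} (F : Euc m → Euc m → ℝ) : Set ℝ :=
  { b : ℝ | ∃ u : Euc m → ℝ, IsVSubOn F b univ u }

/-- The critical value of a Hamiltonian `F` on `ℝ^m`. -/
def critVal {m : ℕ} (F : Euc m → Euc m → ℝ) : ℝ :=
  sInf (subsolLevels F)

/-- The effective Hamiltonian `H̄(x, p)`. -/
def effH {N M k : ℕ} (A : Set (Euc k))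
    (f : Euc N → Euc M → Euc k → Euc N) (g : Euc N → Euc M → Euc k → Euc M)
    (ℓ : Euc N → Euc M → Euc k → ℝ) (x : Euc N) (p : Euc N) : ℝ :=
  critVal (fun (y q : Euc M) => Ham A f g ℓ x y p q)

/-- The frozen Hamiltonian `H₀(y, q) = H(x₀, y, p₀, q)` of the cell problem. -/
def cellH {N M k : ℕ} (A : Set (Euc k))
    (f : Euc N → Euc M → Euc k → Euc N) (g : Euc N → Euc M → Euc k → Euc M)
    (ℓ : Euc N → Euc M → Euc k → ℝ) (x0 p0 : Euc N) : Euc M → Euc M → ℝ :=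
  fun y q => Ham A f g ℓ x0 y p0 q

/-- Viscosity subsolution of `u_t + G(x, D_x u) = 0` on `Ω ⊆ ℝ^n × ℝ`. -/
def IsParabSubOn {n : ℕ} (G : Euc n → Euc n → ℝ) (Ω : Set (Euc n × ℝ)) (u : Euc n × ℝ → ℝ) : Prop :=
  UpperSemicontinuousOn u Ω ∧
  ∀ ψ : Euc n × ℝ → ℝ, ContDiff ℝ 1 ψ → ∀ z ∈ Ω,
    IsLocalMaxOn (fun w => u w - ψ w) Ω z →
    deriv (fun s => ψ (z.1, s)) z.2 + G z.1 (gradient (fun x => ψ (x, z.2)) z.1) ≤ 0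

/-- Viscosity supersolution of `u_t + G(x, D_x u) = 0` on `Ω ⊆ ℝ^n × ℝ`. -/
def IsParabSupOn {n : ℕ} (G : Euc n → Euc n → ℝ) (Ω : Set (Euc n × ℝ)) (u : Euc n × ℝ → ℝ) : Prop :=
  LowerSemicontinuousOn u Ω ∧
  ∀ ψ : Euc n × ℝ → ℝ, ContDiff ℝ 1 ψ → ∀ z ∈ Ω,
    IsLocalMinOn (fun w => u w - ψ w) Ω z →
    0 ≤ deriv (fun s => ψ (z.1, s)) z.2 + G z.1 (gradient (fun x => ψ (x, z.2)) z.1)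

/-- Viscosity subsolution of `u_t + H(x, y, D_x u, D_y u / ε) = 0` on `Ω ⊆ (ℝ^N × ℝ^M) × ℝ`. -/
def IsHJSubOn {N M : ℕ} (Hm : Euc N → Euc M → Euc N → Euc M → ℝ) (ε : ℝ)
    (Ω : Set ((Euc N × Euc M) × ℝ)) (u : (Euc N × Euc M) × ℝ → ℝ) : Prop :=
  UpperSemicontinuousOn u Ω ∧
  ∀ ψ : (Euc N × Euc M) × ℝ → ℝ, ContDiff ℝ 1 ψ → ∀ z ∈ Ω,
    IsLocalMaxOn (fun w => u w - ψ w) Ω z →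
    deriv (fun s => ψ (z.1, s)) z.2 +
      Hm z.1.1 z.1.2 (gradient (fun x => ψ ((x, z.1.2), z.2)) z.1.1)
        (ε⁻¹ • gradient (fun y => ψ ((z.1.1, y), z.2)) z.1.2) ≤ 0

/-- Viscosity supersolution of `u_t + H(x, y, D_x u, D_y u / ε) = 0` on `Ω`. -/
def IsHJSupOn {N M : ℕ} (Hm : Euc N → Euc M → Euc N → Euc M → ℝ) (ε : ℝ)
    (Ω : Set ((Euc N × Euc M) × ℝ)) (u : (Euc N × Euc M) × ℝ → ℝ) : Prop :=
  LowerSemicontinuousOn u Ω ∧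
  ∀ ψ : (Euc N × Euc M) × ℝ → ℝ, ContDiff ℝ 1 ψ → ∀ z ∈ Ω,
    IsLocalMinOn (fun w => u w - ψ w) Ω z →
    0 ≤ deriv (fun s => ψ (z.1, s)) z.2 +
      Hm z.1.1 z.1.2 (gradient (fun x => ψ ((x, z.1.2), z.2)) z.1.1)
        (ε⁻¹ • gradient (fun y => ψ ((z.1.1, y), z.2)) z.1.2)

/-- The upper weak semilimit `(limsup^# V^ε)(z)`. -/
def upperLim {Z : Type*} [TopologicalSpace Z] (V : ℝ → Z → ℝ) (z : Z) : ℝ :=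
  sSup { l : ℝ | ∃ (e : ℕ → ℝ) (w : ℕ → Z), (∀ n, 0 < e n) ∧
    Tendsto e atTop (𝓝 0) ∧ Tendsto w atTop (𝓝 z) ∧
    l = Filter.limsup (fun n => V (e n) (w n)) atTop }

/-- The lower weak semilimit `(liminf_# V^ε)(z)`. -/
def lowerLim {Z : Type*} [TopologicalSpace Z] (V : ℝ → Z → ℝ) (z : Z) : ℝ :=
  sInf { l : ℝ | ∃ (e : ℕ → ℝ) (w : ℕ → Z), (∀ n, 0 < e n) ∧
    Tendsto e atTop (𝓝 0) ∧ Tendsto w atTop (𝓝 z) ∧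
    l = Filter.liminf (fun n => V (e n) (w n)) atTop }

/-- The lower semicontinuous envelope `φ_#`. -/
def lscEnvelope {X : Type*} [TopologicalSpace X] (φ : X → ℝ) (x : X) : ℝ :=
  Filter.liminf φ (𝓝 x)

/-- Local equiboundedness of the family of value functions. -/
def LocEquibounded {N M : ℕ} (V : ℝ → Euc N → Euc M → ℝ → ℝ) : Prop :=
  ∀ C : Set (Euc N × Euc M × ℝ), Bornology.IsBounded C →
    ∃ Mb : ℝ, ∀ ε : ℝ, 0 < ε → ∀ z ∈ C, 0 ≤ z.2.2 → |V ε z.1 z.2.1 z.2.2| ≤ Mb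

/-- The sublevel set `Z_b(y)` of a Hamiltonian. -/
def sublevel {m : ℕ} (G : Euc m → Euc m → ℝ) (b : ℝ) (y : Euc m) : Set (Euc m) :=
  { q | G y q ≤ b }

/-- The support function `σ_b(y, v)` of the sublevel `Z_b(y)`. -/
def suppFn {m : ℕ} (G : Euc m → Euc m → ℝ) (b : ℝ) (y v : Euc m) : ℝ :=
  sSup ((fun q => ⟪q, v⟫) '' sublevel G b y)

/-- The intrinsic length of a curve (Lipschitz curves are differentiable a.e.). -/
def intrinsicLen {m : ℕ} (G : Euc m → Euc m → ℝ) (b : ℝ) (ξ : ℝ → Euc m) : ℝ :=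
  ∫ s in (0:ℝ)..1, suppFn G b (ξ s) (deriv ξ s)

/-- Admissible (Lipschitz) curves on `[0,1]` joining `y₁` to `y₂`. -/
def IsAdmCurve {m : ℕ} (ξ : ℝ → Euc m) (y₁ y₂ : Euc m) : Prop :=
  (∃ Kl : NNReal, LipschitzWith Kl ξ) ∧ ξ 0 = y₁ ∧ ξ 1 = y₂

/-- The intrinsic distance `S_b(y₁, y₂)`. -/
def intrinsicDist {m : ℕ} (G : Euc m → Euc m → ℝ) (b : ℝ) (y₁ y₂ : Euc m) : ℝ :=
  sInf { L : ℝ | ∃ ξ : ℝ → Euc m, IsAdmCurve ξ y₁ y₂ ∧ L = intrinsicLen G b ξ }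

/-- The weighted intrinsic length associated with a weight `h`. -/
def wIntrinsicLen {m : ℕ} (G : Euc m → Euc m → ℝ) (b : ℝ) (h : Euc m → ℝ) (ξ : ℝ → Euc m) : ℝ :=
  ∫ s in (0:ℝ)..1, h (ξ s) * suppFn G b (ξ s) (deriv ξ s)

/-- The weighted intrinsic distance `S_b^h(y₁, y₂)`. -/
def wIntrinsicDist {m : ℕ} (G : Euc m → Euc m → ℝ) (b : ℝ) (h : Euc m → ℝ) (y₁ y₂ : Euc m) : ℝ :=
  sInf { L : ℝ | ∃ ξ : ℝ → Euc m, IsAdmCurve ξ y₁ y₂ ∧ L = wIntrinsicLen G b h ξ }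

/-- The intrinsic critical distance `S(y₁, y₂)` of the cell problem at `(x₀, p₀)`. -/
def cellS {N M k : ℕ} (A : Set (Euc k))
    (f : Euc N → Euc M → Euc k → Euc N) (g : Euc N → Euc M → Euc k → Euc M)
    (ℓ : Euc N → Euc M → Euc k → ℝ) (x0 p0 : Euc N) (y₁ y₂ : Euc M) : ℝ :=
  intrinsicDist (cellH A f g ℓ x0 p0) (effH A f g ℓ x0 p0) y₁ y₂

/-- The Aubry set of `G` at the level `c`: points near which no global viscosity
subsolution of `G(y, Du) = c` is strict. -/
def AubrySet {m : ℕ} (G : Euc m → Euc m → ℝ) (c : ℝ) : Set (Euc m) :=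
  { y₀ | ¬ ∃ (u : Euc m → ℝ) (δ : ℝ) (U : Set (Euc m)),
      IsVSubOn G c univ u ∧ 0 < δ ∧ IsOpen U ∧ y₀ ∈ U ∧ IsVSubOn G (c - δ) U u }

end

/-!
In a time `t / ε` the slow variable moves by at most `Q * t`, whatever `ε` is, so it stays in a
fixed compact set, over which the running and the terminal costs are bounded below. This bounds the
value functions from below.

For the bound from above it suffices to confine the fast variable to a ball, using only finitely
many values of the control. At every state with `y ≠ 0` some control points the fast velocity
strictly inwards, and by continuity it does so in a neighbourhood. By compactness finitely many
controls are enough, and a Lebesgue number of the cover gives each state a control that remains safe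
within a fixed distance of it. Holding that control for a short time `δ`, and then choosing again,
never drives the fast variable out of the ball. The hold time `δ` depends on `ε`, but the finite
control set and the compact set of visited states do not, so neither does the bound on the costs.
-/

section PicardLindelof

variable {E : Type*} [NormedAddCommGroup E] [NormedSpace ℝ E] [CompleteSpace E]

-- The existence statements in Mathlib do not record that the solution stays in the ball of radius
-- `a`, which has to be read off the fixed point of the Picard operator.
lemma exists_hasDerivWithinAt_mem_closedBall_of_isPicardLindelof {v : ℝ → E → E}
    {tmin tmax : ℝ} {t₀ : Icc tmin tmax} {x₀ x : E} {a r L K : NNReal}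
    (hv : IsPicardLindelof v t₀ x₀ a r L K) (hx : x ∈ closedBall x₀ r) :
    ∃ γ : ℝ → E, γ t₀ = x ∧ ∀ t ∈ Icc tmin tmax,
      HasDerivWithinAt γ (v t (γ t)) (Icc tmin tmax) t ∧ γ t ∈ closedBall x₀ a := by
  obtain ⟨β, hβ⟩ := ODE.FunSpace.exists_isFixedPt_next hv hx
  have heq : ∀ t ∈ Icc tmin tmax, β.compProj t = ODE.picard v t₀ x β.compProj t := by
    intro t ht
    nth_rw 1 [← hβ]
    rw [ODE.FunSpace.compProj_of_mem ht, ODE.FunSpace.next_apply]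
  have hmem : ∀ t, β.compProj t ∈ closedBall x₀ a := fun _ =>
    β.compProj_mem_closedBall hv.mul_max_le
  refine ⟨β.compProj, by simpa using heq t₀ t₀.2, fun t ht => ⟨?_, hmem t⟩⟩
  exact (ODE.hasDerivWithinAt_picard_Icc t₀.2 hv.continuousOn_uncurry
    β.continuous_compProj.continuousOn (fun t _ => hmem t) x ht).congr heq (heq t ht)

lemma exists_hasDerivWithinAt_dist_le_of_lipschitzWith {v : E → E} {K : NNReal}
    (hv : LipschitzWith K v) {δ : ℝ} (hδ : 0 ≤ δ) (hKδ : 2 * K * δ ≤ 1) (z : E) :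
    ∃ γ : ℝ → E, γ 0 = z ∧ ∀ s ∈ Icc 0 δ,
      HasDerivWithinAt γ (v (γ s)) (Icc 0 δ) s ∧ dist (γ s) z ≤ 2 * δ * ‖v z‖ := by
  have hnorm : ∀ w ∈ closedBall z (2 * δ * ‖v z‖), ‖v w‖ ≤ 2 * ‖v z‖ := by
    intro w hw
    calc ‖v w‖ ≤ ‖v z‖ + ‖v w - v z‖ := norm_le_norm_add_norm_sub' _ _
      _ ≤ ‖v z‖ + K * (2 * δ * ‖v z‖) := by
        rw [← dist_eq_norm]
        gcongr
        exact hv.dist_le_mul_of_le hw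
      _ = ‖v z‖ + 2 * K * δ * ‖v z‖ := by ring
      _ ≤ ‖v z‖ + 1 * ‖v z‖ := by gcongr
      _ = 2 * ‖v z‖ := by ring
  have hPL : IsPicardLindelof (fun _ => v) (⟨0, left_mem_Icc.2 hδ⟩ : Icc 0 δ) z
      ⟨2 * δ * ‖v z‖, by positivity⟩ 0 ⟨2 * ‖v z‖, by positivity⟩ K := by
    refine IsPicardLindelof.of_time_independent hnorm hv.lipschitzOnWith ?_
    change 2 * ‖v z‖ * max (δ - 0) (0 - 0) ≤ 2 * δ * ‖v z‖ - 0
    rw [sub_zero, sub_self, max_eq_left hδ]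
    linarith
  exact exists_hasDerivWithinAt_mem_closedBall_of_isPicardLindelof hPL (mem_closedBall_self le_rfl)

end PicardLindelof

section Concatenation

/-- The concatenation of the curves `G 0, G 1, …`, each run for a time `δ`; at the junction time
`(n + 1) * δ` it takes the initial value of `G (n + 1)`, so that it is right continuous whenever
the `G n` are. -/
noncomputable def concatCurve {E : Type*} (δ : ℝ) (G : ℕ → ℝ → E) (s : ℝ) : E :=
  G ⌊s / δ⌋₊ (s - ⌊s / δ⌋₊ * δ)

variable {E : Type*} {δ : ℝ} {G : ℕ → ℝ → E}

lemma mem_Ico_floor_div_mul (hδ : 0 < δ) {s : ℝ} (hs : 0 ≤ s) :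
    s ∈ Ico (⌊s / δ⌋₊ * δ) ((⌊s / δ⌋₊ + 1) * δ) :=
  ⟨(le_div_iff₀ hδ).1 (Nat.floor_le (by positivity)), (div_lt_iff₀ hδ).1 (Nat.lt_floor_add_one _)⟩

lemma floor_div_eq_of_mem_Ico (hδ : 0 < δ) {n : ℕ} {s : ℝ} (hs : s ∈ Ico (n * δ) ((n + 1) * δ)) :
    ⌊s / δ⌋₊ = n := by
  have h0 : 0 ≤ s := le_trans (by positivity) hs.1
  exact (Nat.floor_eq_iff (by positivity)).2 ⟨(le_div_iff₀ hδ).2 hs.1, (div_lt_iff₀ hδ).2 hs.2⟩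

lemma concatCurve_of_mem_Ico (hδ : 0 < δ) {n : ℕ} {s : ℝ}
    (hs : s ∈ Ico (n * δ) ((n + 1) * δ)) : concatCurve δ G s = G n (s - n * δ) := by
  rw [concatCurve, floor_div_eq_of_mem_Ico hδ hs]

lemma concatCurve_natCast_mul (hδ : 0 < δ) (n : ℕ) : concatCurve δ G (n * δ) = G n 0 := by
  rw [concatCurve_of_mem_Ico hδ ⟨le_rfl, by linarith⟩, sub_self]

lemma concatCurve_of_mem_Icc (hδ : 0 < δ) (hglue : ∀ n, G (n + 1) 0 = G n δ) {n : ℕ} {s : ℝ}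
    (hs : s ∈ Icc (n * δ) ((n + 1) * δ)) : concatCurve δ G s = G n (s - n * δ) := by
  rcases hs.2.lt_or_eq with hlt | rfl
  · exact concatCurve_of_mem_Ico hδ ⟨hs.1, hlt⟩
  · rw [← Nat.cast_succ, concatCurve_natCast_mul hδ, hglue, Nat.cast_succ]
    congr 1
    ring

lemma continuousOn_concatCurve [TopologicalSpace E] (hδ : 0 < δ)
    (hG : ∀ n, ContinuousOn (G n) (Icc 0 δ)) (hglue : ∀ n, G (n + 1) 0 = G n δ) :
    ContinuousOn (concatCurve δ G) (Ici 0) := by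
  have hpiece : ∀ n : ℕ, ContinuousOn (concatCurve δ G) (Icc (n * δ) ((n + 1) * δ)) := by
    intro n
    refine ((hG n).comp (t := Icc 0 δ) (f := fun s => s - n * δ) (by fun_prop) ?_).congr
      fun s hs => concatCurve_of_mem_Icc hδ hglue hs
    exact fun s hs => ⟨by linarith [hs.1], by linarith [hs.2]⟩
  have hinit : ∀ n : ℕ, ContinuousOn (concatCurve δ G) (Icc 0 (n * δ)) := by
    intro n
    induction n with
    | zero => simp
    | succ n ih =>
      rw [Nat.cast_succ, ← Icc_union_Icc_eq_Icc (b := n * δ) (by positivity) (by linarith)]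
      exact ih.union_of_isClosed (hpiece n) isClosed_Icc isClosed_Icc
  intro s hs
  obtain ⟨n, hn⟩ := exists_nat_gt (s / δ)
  refine (hinit n s ⟨hs, ((div_lt_iff₀ hδ).1 hn).le⟩).mono_of_mem_nhdsWithin ?_
  filter_upwards [self_mem_nhdsWithin, nhdsWithin_le_nhds (Iio_mem_nhds ((div_lt_iff₀ hδ).1 hn))]
    with τ hτ₀ hτ using ⟨hτ₀, hτ.le⟩

lemma hasDerivWithinAt_Ioi_concatCurve [NormedAddCommGroup E] [NormedSpace ℝ E] (hδ : 0 < δ)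
    {n : ℕ} {s : ℝ} (hs : s ∈ Ico (n * δ) ((n + 1) * δ)) {v : E}
    (hG : HasDerivWithinAt (G n) v (Icc 0 δ) (s - n * δ)) :
    HasDerivWithinAt (concatCurve δ G) v (Ioi s) s := by
  have hshift : HasDerivWithinAt (fun τ => G n (τ - n * δ)) v (Ico s ((n + 1) * δ)) s := by
    have hmaps : MapsTo (fun τ => τ - n * δ) (Ico s ((n + 1) * δ)) (Icc 0 δ) := fun τ hτ =>
      ⟨by linarith [hs.1, hτ.1], by linarith [hτ.2]⟩
    simpa only [one_smul, Function.comp_def, id] using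
      hG.scomp s ((hasDerivWithinAt_id s _).sub_const _) hmaps
  have hconcat := hshift.congr
    (fun τ hτ => concatCurve_of_mem_Ico (G := G) hδ ⟨hs.1.trans hτ.1, hτ.2⟩)
    (concatCurve_of_mem_Ico hδ hs)
  exact (hconcat.mono_of_mem_nhdsWithin (Ico_mem_nhdsGE hs.2)).mono Ioi_subset_Ici_self

end Concatenation

section SampleAndHold

variable {E U : Type*} {δ : ℝ} {Γ : E → ℝ → E} {u : E → U} {z : E}

/-- The sample-and-hold path issued from `z`: from each sampling point `w`, reached at a multiple
of `δ`, the curve `Γ w` is followed for a time `δ`. -/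
noncomputable def sampledPath (δ : ℝ) (Γ : E → ℝ → E) (z : E) : ℝ → E :=
  concatCurve δ fun n => Γ ((Γ · δ)^[n] z)

/-- The control of the sample-and-hold path `sampledPath δ Γ z` under the feedback `u`: it is
frozen at its value `u w` at the last sampling point `w`. -/
noncomputable def sampledControl (δ : ℝ) (Γ : E → ℝ → E) (u : E → U) (z : E) : ℝ → U :=
  concatCurve δ fun n _ => u ((Γ · δ)^[n] z)

lemma sampledPath_zero (hΓ : ∀ w, Γ w 0 = w) : sampledPath δ Γ z 0 = z := by
  simp [sampledPath, concatCurve, hΓ]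

lemma sampledPath_natCast_mul (hδ : 0 < δ) (hΓ : ∀ w, Γ w 0 = w) (n : ℕ) :
    sampledPath δ Γ z (n * δ) = (Γ · δ)^[n] z := by
  rw [sampledPath, concatCurve_natCast_mul hδ, hΓ]

lemma measurable_sampledControl [MeasurableSpace U] : Measurable (sampledControl δ Γ u z) :=
  (measurable_from_nat (f := fun n => u ((Γ · δ)^[n] z))).comp
    (Nat.measurable_floor.comp (measurable_id.div_const δ))

lemma continuousOn_sampledPath [TopologicalSpace E] (hδ : 0 < δ) (hΓ : ∀ w, Γ w 0 = w)
    (hcont : ∀ w, ContinuousOn (Γ w) (Icc 0 δ)) : ContinuousOn (sampledPath δ Γ z) (Ici 0) :=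
  continuousOn_concatCurve hδ (fun _ => hcont _) fun n => by
    rw [hΓ, Function.iterate_succ_apply']

lemma hasDerivWithinAt_Ioi_sampledPath [NormedAddCommGroup E] [NormedSpace ℝ E] (hδ : 0 < δ)
    {Φ : E → U → E}
    (hderiv : ∀ w, ∀ s ∈ Icc 0 δ, HasDerivWithinAt (Γ w) (Φ (Γ w s) (u w)) (Icc 0 δ) s)
    {s : ℝ} (hs : 0 ≤ s) :
    HasDerivWithinAt (sampledPath δ Γ z) (Φ (sampledPath δ Γ z s) (sampledControl δ Γ u z s))
      (Ioi s) s := by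
  have hmem := mem_Ico_floor_div_mul hδ hs
  exact hasDerivWithinAt_Ioi_concatCurve hδ hmem
    (hderiv _ _ ⟨by linarith [hmem.1], by linarith [hmem.2]⟩)

lemma sampledPath_mem_of_forall_mem (hδ : 0 < δ) (hΓ : ∀ w, Γ w 0 = w) {S W : Set E} {T : ℝ}
    (hS : ∀ s ∈ Icc 0 T, sampledPath δ Γ z s ∈ S)
    (hW : ∀ w ∈ S, w ∈ W → ∀ s ∈ Icc 0 δ, Γ w s ∈ W) (hz : z ∈ W) :
    ∀ s ∈ Icc 0 T, sampledPath δ Γ z s ∈ W := by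
  have hsample : ∀ n : ℕ, n * δ ≤ T → (Γ · δ)^[n] z ∈ S := fun n hn => by
    rw [← sampledPath_natCast_mul hδ hΓ]
    exact hS _ ⟨by positivity, hn⟩
  have hsampleW : ∀ n : ℕ, n * δ ≤ T → (Γ · δ)^[n] z ∈ W := by
    intro n
    induction n with
    | zero => exact fun _ => hz
    | succ n ih =>
      intro hn
      have hn' : n * δ ≤ T := le_trans (by gcongr; simp) hn
      rw [Function.iterate_succ_apply']
      exact hW _ (hsample n hn') (ih hn') δ (right_mem_Icc.2 hδ.le)
  intro s hs
  have hmem := mem_Ico_floor_div_mul hδ hs.1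
  have hle := hmem.1.trans hs.2
  exact hW _ (hsample _ hle) (hsampleW _ hle) _ ⟨by linarith [hmem.1], by linarith [hmem.2]⟩

end SampleAndHold

section FiniteControls

lemma exists_finite_subset_forall_ball_subset {X ι : Type*} [PseudoMetricSpace X] {K : Set X}
    {A : Set ι} {c : ι → Set X} (hK : IsCompact K) (hc : ∀ a ∈ A, IsOpen (c a))
    (hcover : K ⊆ ⋃ a ∈ A, c a) :
    ∃ F ⊆ A, F.Finite ∧ ∃ ρ > 0, ∀ z ∈ K, ∃ a ∈ F, ball z ρ ⊆ c a := by
  obtain ⟨F, hFA, hF, hKF⟩ := hK.elim_finite_subcover_image hc hcover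
  obtain ⟨ρ, hρ, hball⟩ := lebesgue_number_lemma_of_metric hK (c := fun a : F => c a)
    (fun a => hc a (hFA a.2)) (by rwa [← biUnion_eq_iUnion F fun a _ => c a])
  refine ⟨F, hFA, hF, ρ, hρ, fun z hz => ?_⟩
  obtain ⟨a, ha⟩ := hball z hz
  exact ⟨a, a.2, ha⟩

lemma exists_forall_le_of_finite_of_isCompact {X ι : Type*} [TopologicalSpace X] {K : Set X}
    {F : Set ι} (hF : F.Finite) (hK : IsCompact K) {φ : X → ι → ℝ}
    (hφ : ∀ a ∈ F, ContinuousOn (φ · a) K) : ∃ B, ∀ a ∈ F, ∀ z ∈ K, φ z a ≤ B := by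
  obtain ⟨B, hB⟩ := hF.bddAbove_biUnion.2 fun a ha => hK.bddAbove_image (hφ a ha)
  exact ⟨B, fun a ha z hz => hB (mem_biUnion ha ⟨z, hz, rfl⟩)⟩

lemma intervalIntegrable_apply_of_finite {U E : Type*} [MeasurableSpace U]
    [MeasurableSingletonClass U] [NormedAddCommGroup E] {μ : Measure ℝ} {F : Set U}
    (hF : F.Finite) {α : ℝ → U} (hα : Measurable α) (hαF : ∀ s, α s ∈ F) {φ : ℝ → U → E}
    {a b : ℝ} (hφ : ∀ c ∈ F, IntervalIntegrable (φ · c) μ a b) :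
    IntervalIntegrable (fun s => φ s (α s)) μ a b := by
  rw [intervalIntegrable_iff]
  have hcover : uIoc a b ⊆ ⋃ c ∈ F, uIoc a b ∩ α ⁻¹' {c} := fun s hs =>
    mem_biUnion (hαF s) ⟨hs, rfl⟩
  refine ((integrableOn_finite_biUnion hF).2 fun c hc => ?_).mono_set hcover
  refine ((hφ c hc).def'.mono_set inter_subset_left).congr_fun ?_
    (measurableSet_uIoc.inter (hα (measurableSet_singleton c)))
  rintro s ⟨-, rfl⟩
  rfl

variable {E U : Type*} [NormedAddCommGroup E] [NormedSpace ℝ E] [CompleteSpace E]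

lemma exists_pos_forall_exists_hasDerivWithinAt_mem_ball {Φ : E → U → E} {F : Set U}
    (hF : F.Finite) {C : NNReal} (hΦ : ∀ a ∈ F, LipschitzWith C (Φ · a)) {K : Set E}
    (hK : IsCompact K) {ρ : ℝ} (hρ : 0 < ρ) :
    ∃ δ > 0, ∀ z, ∀ a ∈ F, ∃ γ : ℝ → E, γ 0 = z ∧
      (∀ s ∈ Icc 0 δ, HasDerivWithinAt γ (Φ (γ s) a) (Icc 0 δ) s) ∧
      (z ∈ K → ∀ s ∈ Icc 0 δ, γ s ∈ ball z ρ) := by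
  obtain ⟨B, hB⟩ := exists_forall_le_of_finite_of_isCompact hF hK (φ := fun z a => ‖Φ z a‖)
    fun a ha => (hΦ a ha).continuous.norm.continuousOn
  obtain ⟨δ₁, hδ₁, hCδ₁⟩ := exists_pos_mul_lt one_pos (2 * (C : ℝ))
  obtain ⟨δ₂, hδ₂, hBδ₂⟩ := exists_pos_mul_lt hρ (2 * |B|)
  have hCδ : 2 * C * min δ₁ δ₂ ≤ 1 :=
    (mul_le_mul_of_nonneg_left (min_le_left _ _) (by positivity)).trans hCδ₁.le
  refine ⟨min δ₁ δ₂, lt_min hδ₁ hδ₂, fun z a ha => ?_⟩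
  obtain ⟨γ, hγ₀, hγ⟩ := exists_hasDerivWithinAt_dist_le_of_lipschitzWith (hΦ a ha)
    (lt_min hδ₁ hδ₂).le hCδ z
  refine ⟨γ, hγ₀, fun s hs => (hγ s hs).1, fun hz s hs => ?_⟩
  calc dist (γ s) z ≤ 2 * min δ₁ δ₂ * ‖Φ z a‖ := (hγ s hs).2
    _ ≤ 2 * δ₂ * |B| := by
      gcongr
      · exact min_le_right _ _
      · exact (hB a ha z hz).trans (le_abs_self B)
    _ = 2 * |B| * δ₂ := by ring
    _ < ρ := hBδ₂

end FiniteControls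

section Confinement

lemma norm_le_of_inner_deriv_right_neg {Y : Type*} [NormedAddCommGroup Y] [InnerProductSpace ℝ Y]
    {η η' : ℝ → Y} {a b R : ℝ} (hη : ContinuousOn η (Icc a b))
    (hη' : ∀ s ∈ Ico a b, HasDerivWithinAt η (η' s) (Ici s) s) (ha : ‖η a‖ ≤ R)
    (hneg : ∀ s ∈ Ico a b, ‖η s‖ = R → ⟪η' s, η s⟫ < 0) : ∀ s ∈ Icc a b, ‖η s‖ ≤ R := by
  have hR : 0 ≤ R := (norm_nonneg _).trans ha
  have hsq : ∀ s ∈ Icc a b, ‖η s‖ ^ 2 ≤ R ^ 2 := by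
    refine image_le_of_deriv_right_lt_deriv_boundary' (hη.norm.pow 2)
      (fun s hs => (hη' s hs).norm_sq) (pow_le_pow_left₀ (norm_nonneg _) ha 2)
      continuousOn_const
      (fun s _ => hasDerivWithinAt_const s _ (R ^ 2)) fun s hs hRs => ?_
    rw [real_inner_comm]
    linarith [hneg s hs ((pow_left_inj₀ (norm_nonneg _) hR two_ne_zero).1 hRs)]
  exact fun s hs => (sq_le_sq₀ (norm_nonneg _) hR).1 (hsq s hs)

/-- The states at which holding the control `a` cannot drive the fast variable out of the ball of
radius `R`: either the fast variable is inside the open ball, or its velocity points towards the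
origin. -/
def inwardSet {X Y U : Type*} [NormedAddCommGroup Y] [InnerProductSpace ℝ Y]
    (g : X → Y → U → Y) (R : ℝ) (a : U) : Set (X × Y) :=
  {z | ‖z.2‖ < R ∨ ⟪g z.1 z.2 a, z.2⟫ < 0}

/-- The vector field of `(CD_ε)` on the product of the slow and the fast state spaces. -/
def slowFastField {X Y U : Type*} [SMul ℝ X] (f : X → Y → U → X) (g : X → Y → U → Y) (ε : ℝ)
    (z : X × Y) (a : U) : X × Y :=
  (ε • f z.1 z.2 a, g z.1 z.2 a)

lemma lipschitzWith_slowFastField {X Y U : Type*} [NormedAddCommGroup X] [NormedSpace ℝ X]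
    [PseudoEMetricSpace Y] {f : X → Y → U → X} {g : X → Y → U → Y} {ε : ℝ} {C : NNReal} {a : U}
    (hf : LipschitzWith C fun z : X × Y => f z.1 z.2 a)
    (hg : LipschitzWith C fun z : X × Y => g z.1 z.2 a) :
    LipschitzWith (max (‖ε‖₊ * C) C) (slowFastField f g ε · a) :=
  ((lipschitzWith_smul ε).comp hf).prodMk hg

variable {X Y U : Type*} [NormedAddCommGroup Y] [InnerProductSpace ℝ Y]
  {f : X → Y → U → X} {g : X → Y → U → Y} {A F : Set U} {R ρ ε : ℝ}

lemma isOpen_inwardSet [TopologicalSpace X] {a : U}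
    (hg : Continuous fun z : X × Y => g z.1 z.2 a) : IsOpen (inwardSet g R a) :=
  (isOpen_lt continuous_snd.norm continuous_const).union
    (isOpen_lt (hg.inner (𝕜 := ℝ) continuous_snd) continuous_const)

lemma iUnion_inwardSet_eq_univ (hA : A.Nonempty) (hR : 0 < R)
    (hinward : ∀ x y, y ≠ 0 → ∃ a ∈ A, ⟪g x y a, y⟫ < 0) : ⋃ a ∈ A, inwardSet g R a = univ := by
  refine eq_univ_of_forall fun ⟨x, y⟩ => ?_
  rcases eq_or_ne y 0 with rfl | hy
  · obtain ⟨a, ha⟩ := hA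
    exact mem_biUnion ha (Or.inl (by simpa using hR))
  · obtain ⟨a, ha, hneg⟩ := hinward x y hy
    exact mem_biUnion ha (Or.inr hneg)

variable [NormedAddCommGroup X] [NormedSpace ℝ X]

lemma norm_snd_le_of_forall_mem_inwardSet {a : U} {γ : ℝ → X × Y} {δ : ℝ}
    (hγ : ∀ s ∈ Icc 0 δ, HasDerivWithinAt γ (slowFastField f g ε (γ s) a) (Icc 0 δ) s)
    (hin : ∀ s ∈ Icc 0 δ, γ s ∈ inwardSet g R a) (h0 : ‖(γ 0).2‖ ≤ R) :
    ∀ s ∈ Icc 0 δ, ‖(γ s).2‖ ≤ R := by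
  have hfast : ∀ s ∈ Icc 0 δ,
      HasDerivWithinAt (fun τ => (γ τ).2) (g (γ s).1 (γ s).2 a) (Icc 0 δ) s := fun s hs =>
    (hasFDerivAt_snd (𝕜 := ℝ) (p := γ s)).comp_hasDerivWithinAt s (hγ s hs)
  refine norm_le_of_inner_deriv_right_neg (fun s hs => (hfast s hs).continuousWithinAt)
    (fun s hs => (hfast s (Ico_subset_Icc_self hs)).mono_of_mem_nhdsWithin
      (Icc_mem_nhdsGE_of_mem hs)) h0 fun s hs hRs => ?_
  exact (hin s (Ico_subset_Icc_self hs)).resolve_left hRs.not_lt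

lemma exists_confining_feedback [CompleteSpace X] [CompleteSpace Y] (hF : F.Finite)
    {C : NNReal} (hf : ∀ a ∈ F, LipschitzWith C fun z : X × Y => f z.1 z.2 a)
    (hg : ∀ a ∈ F, LipschitzWith C fun z : X × Y => g z.1 z.2 a) {K : Set (X × Y)}
    (hK : IsCompact K) (hne : K.Nonempty) (hρ : 0 < ρ)
    (hball : ∀ z ∈ K, ∃ a ∈ F, ball z ρ ⊆ inwardSet g R a) (ε : ℝ) :
    ∃ δ > 0, ∃ (u : X × Y → U) (Γ : X × Y → ℝ → X × Y), (∀ z, u z ∈ F) ∧ (∀ z, Γ z 0 = z) ∧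
      (∀ z, ∀ s ∈ Icc 0 δ,
        HasDerivWithinAt (Γ z) (slowFastField f g ε (Γ z s) (u z)) (Icc 0 δ) s) ∧
      ∀ z ∈ K, ‖z.2‖ ≤ R → ∀ s ∈ Icc 0 δ, ‖(Γ z s).2‖ ≤ R := by
  obtain ⟨δ, hδ, hhold⟩ := exists_pos_forall_exists_hasDerivWithinAt_mem_ball hF
    (fun a ha => lipschitzWith_slowFastField (ε := ε) (hf a ha) (hg a ha)) hK hρ
  have hfeedback : ∀ z, ∃ a ∈ F, z ∈ K → ball z ρ ⊆ inwardSet g R a := by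
    intro z
    by_cases hz : z ∈ K
    · obtain ⟨a, ha, hza⟩ := hball z hz
      exact ⟨a, ha, fun _ => hza⟩
    · obtain ⟨a, ha, -⟩ := hball _ hne.some_mem
      exact ⟨a, ha, fun h => absurd h hz⟩
  choose u huF hu using hfeedback
  choose Γ hΓ₀ hΓ' hΓball using fun z => hhold z (u z) (huF z)
  refine ⟨δ, hδ, u, Γ, huF, hΓ₀, hΓ', fun z hz hzR => ?_⟩
  exact norm_snd_le_of_forall_mem_inwardSet (hΓ' z) (fun s hs => hu z hz (hΓball z hz s hs))
    (by rwa [hΓ₀])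

end Confinement

section Trajectories

lemma intervalIntegrable_apply_curve {Z U E : Type*} [TopologicalSpace Z] [MeasurableSpace U]
    [MeasurableSingletonClass U] [NormedAddCommGroup E] {F : Set U} (hF : F.Finite) {α : ℝ → U}
    (hα : Measurable α) (hαF : ∀ s, α s ∈ F) {φ : Z → U → E}
    (hφ : ∀ a ∈ F, Continuous (φ · a)) {γ : ℝ → Z} (hγ : ContinuousOn γ (Ici 0)) {t : ℝ}
    (ht : 0 ≤ t) : IntervalIntegrable (fun s => φ (γ s) (α s)) volume 0 t :=
  intervalIntegrable_apply_of_finite (φ := fun s a => φ (γ s) a) hF hα hαF fun a ha =>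
    ((hφ a ha).comp_continuousOn (hγ.mono Icc_subset_Ici_self)).intervalIntegrable_of_Icc ht

variable {N M k : ℕ} {f : Euc N → Euc M → Euc k → Euc N} {g : Euc N → Euc M → Euc k → Euc M}
  {A F : Set (Euc k)} {ε Q R Rx : ℝ} {C : NNReal} {α : ℝ → Euc k}

lemma IsTrajectory.norm_slow_le {ξ : ℝ → Euc N} {η : ℝ → Euc M}
    (h : IsTrajectory f g ε α ξ η) (hε : 0 ≤ ε) (hα : IsControl A α)
    (hf : ∀ x y, ∀ a ∈ A, ‖f x y a‖ ≤ Q) {s t : ℝ} (hs : s ∈ Icc 0 t) :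
    ‖ξ s‖ ≤ ‖ξ 0‖ + ε * (Q * t) := by
  have hQ : 0 ≤ Q := (norm_nonneg _).trans (hf 0 0 _ (hα.2 0))
  have hint : ‖∫ τ in (0 : ℝ)..s, f (ξ τ) (η τ) (α τ)‖ ≤ Q * s := by
    simpa only [sub_zero, abs_of_nonneg hs.1] using
      intervalIntegral.norm_integral_le_of_norm_le_const (a := 0) (b := s)
        fun τ _ => hf (ξ τ) (η τ) _ (hα.2 τ)
  calc ‖ξ s‖ = ‖ξ 0 + ε • ∫ τ in (0 : ℝ)..s, f (ξ τ) (η τ) (α τ)‖ := by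
        rw [← h.2.2.1 s hs.1]
    _ ≤ ‖ξ 0‖ + ε * ‖∫ τ in (0 : ℝ)..s, f (ξ τ) (η τ) (α τ)‖ := by
        rw [← norm_smul_of_nonneg hε]
        exact norm_add_le _ _
    _ ≤ ‖ξ 0‖ + ε * (Q * t) := by
        gcongr
        exact hint.trans (mul_le_mul_of_nonneg_left hs.2 hQ)

lemma isTrajectory_of_hasDerivWithinAt_Ioi {γ : ℝ → Euc N × Euc M}
    (hγ : ContinuousOn γ (Ici 0))
    (hγ' : ∀ s, 0 ≤ s → HasDerivWithinAt γ (slowFastField f g ε (γ s) (α s)) (Ioi s) s)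
    (hf : ∀ t, 0 ≤ t → IntervalIntegrable (fun s => f (γ s).1 (γ s).2 (α s)) volume 0 t)
    (hg : ∀ t, 0 ≤ t → IntervalIntegrable (fun s => g (γ s).1 (γ s).2 (α s)) volume 0 t) :
    IsTrajectory f g ε α (fun s => (γ s).1) fun s => (γ s).2 := by
  have hslow : ∀ s, 0 ≤ s →
      HasDerivWithinAt (fun s => (γ s).1) (ε • f (γ s).1 (γ s).2 (α s)) (Ioi s) s := fun s hs =>
    (hasFDerivAt_fst (𝕜 := ℝ) (p := γ s)).comp_hasDerivWithinAt s (hγ' s hs)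
  have hfast : ∀ s, 0 ≤ s →
      HasDerivWithinAt (fun s => (γ s).2) (g (γ s).1 (γ s).2 (α s)) (Ioi s) s := fun s hs =>
    (hasFDerivAt_snd (𝕜 := ℝ) (p := γ s)).comp_hasDerivWithinAt s (hγ' s hs)
  refine ⟨hf, hg, fun t ht => ?_, fun t ht => ?_⟩
  · rw [← intervalIntegral.integral_smul, intervalIntegral.integral_eq_sub_of_hasDeriv_right_of_le
      ht (hγ.fst.mono Icc_subset_Ici_self) (fun s hs => hslow s hs.1.le) ((hf t ht).smul ε),
      add_sub_cancel]
  · rw [intervalIntegral.integral_eq_sub_of_hasDeriv_right_of_le ht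
      (hγ.snd.mono Icc_subset_Ici_self) (fun s hs => hfast s hs.1.le) (hg t ht), add_sub_cancel]

lemma isControl_sampledControl {E : Type*} {δ : ℝ} {Γ : E → ℝ → E} {u : E → Euc k}
    (hu : ∀ w, u w ∈ A) (z : E) : IsControl A (sampledControl δ Γ u z) :=
  ⟨measurable_sampledControl, fun _ => hu _⟩

lemma isTrajectory_sampledPath (hF : F.Finite)
    (hf : ∀ a ∈ F, Continuous fun z : Euc N × Euc M => f z.1 z.2 a)
    (hg : ∀ a ∈ F, Continuous fun z : Euc N × Euc M => g z.1 z.2 a) {δ : ℝ} (hδ : 0 < δ)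
    {u : Euc N × Euc M → Euc k} {Γ : Euc N × Euc M → ℝ → Euc N × Euc M} (hu : ∀ w, u w ∈ F)
    (hΓ : ∀ w, Γ w 0 = w)
    (hΓ' : ∀ w, ∀ s ∈ Icc 0 δ,
      HasDerivWithinAt (Γ w) (slowFastField f g ε (Γ w s) (u w)) (Icc 0 δ) s)
    (z : Euc N × Euc M) :
    IsTrajectory f g ε (sampledControl δ Γ u z) (fun s => (sampledPath δ Γ z s).1)
      fun s => (sampledPath δ Γ z s).2 := by
  have hα := isControl_sampledControl (δ := δ) (Γ := Γ) hu z
  have hcont : ContinuousOn (sampledPath δ Γ z) (Ici 0) :=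
    continuousOn_sampledPath hδ hΓ fun w s hs => (hΓ' w s hs).continuousWithinAt
  exact isTrajectory_of_hasDerivWithinAt_Ioi hcont
    (fun s hs => hasDerivWithinAt_Ioi_sampledPath hδ hΓ' hs)
    (fun t => intervalIntegrable_apply_curve (φ := fun z a => f z.1 z.2 a) hF hα.1 hα.2 hf hcont)
    (fun t => intervalIntegrable_apply_curve (φ := fun z a => g z.1 z.2 a) hF hα.1 hα.2 hg hcont)

lemma exists_confined_trajectory (hF : F.Finite)
    (hfLip : ∀ a ∈ F, LipschitzWith C fun z : Euc N × Euc M => f z.1 z.2 a)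
    (hgLip : ∀ a ∈ F, LipschitzWith C fun z : Euc N × Euc M => g z.1 z.2 a)
    (hfBdd : ∀ x y, ∀ a ∈ F, ‖f x y a‖ ≤ Q) {ρ : ℝ} (hρ : 0 < ρ)
    (hball : ∀ z ∈ closedBall (0 : Euc N) Rx ×ˢ closedBall (0 : Euc M) R,
      ∃ a ∈ F, ball z ρ ⊆ inwardSet g R a)
    (hε : 0 ≤ ε) {x : Euc N} {y : Euc M} {T : ℝ} (hx : ‖x‖ + ε * (Q * T) ≤ Rx) (hRx : 0 ≤ Rx)
    (hy : ‖y‖ ≤ R) :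
    ∃ (α : ℝ → Euc k) (γ : ℝ → Euc N × Euc M), IsControl F α ∧
      IsTrajectory f g ε α (fun s => (γ s).1) (fun s => (γ s).2) ∧ γ 0 = (x, y) ∧
      ContinuousOn γ (Ici 0) ∧
      ∀ s ∈ Icc 0 T, γ s ∈ closedBall (0 : Euc N) Rx ×ˢ closedBall (0 : Euc M) R := by
  have hne : (closedBall (0 : Euc N) Rx ×ˢ closedBall (0 : Euc M) R).Nonempty :=
    ⟨0, by simpa using ⟨hRx, (norm_nonneg y).trans hy⟩⟩
  obtain ⟨δ, hδ, u, Γ, hu, hΓ, hΓ', hconf⟩ := exists_confining_feedback hF hfLip hgLip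
    ((isCompact_closedBall 0 Rx).prod (isCompact_closedBall 0 R)) hne hρ hball ε
  have hα := isControl_sampledControl (δ := δ) (Γ := Γ) hu (x, y)
  have htraj := isTrajectory_sampledPath hF (fun a ha => (hfLip a ha).continuous)
    (fun a ha => (hgLip a ha).continuous) hδ hu hΓ hΓ' (x, y)
  have hstart : sampledPath δ Γ (x, y) 0 = (x, y) := sampledPath_zero hΓ
  have hslow : ∀ s ∈ Icc 0 T, ‖(sampledPath δ Γ (x, y) s).1‖ ≤ Rx := fun s hs =>
    (htraj.norm_slow_le hε hα hfBdd hs).trans (by rwa [hstart])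
  have hfast : ∀ s ∈ Icc 0 T, ‖(sampledPath δ Γ (x, y) s).2‖ ≤ R :=
    sampledPath_mem_of_forall_mem (S := {z | ‖z.1‖ ≤ Rx}) (W := {z | ‖z.2‖ ≤ R}) hδ hΓ hslow
      (fun w hw₁ hw₂ => hconf w ⟨by simpa using hw₁, by simpa using hw₂⟩ hw₂) hy
  refine ⟨_, _, hα, htraj, hstart, continuousOn_sampledPath hδ hΓ fun w s hs =>
    (hΓ' w s hs).continuousWithinAt, fun s hs => ?_⟩
  exact ⟨by simpa using hslow s hs, by simpa using hfast s hs⟩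

end Trajectories

section Costs

lemma mul_integral_div_le_of_le {φ : ℝ → ℝ} {ε t B : ℝ} (hε : 0 < ε) (ht : 0 ≤ t)
    (hφ : IntervalIntegrable φ volume 0 (t / ε)) (hB : ∀ s ∈ Icc 0 (t / ε), φ s ≤ B) :
    ε * ∫ s in (0 : ℝ)..(t / ε), φ s ≤ t * B := by
  calc ε * ∫ s in (0 : ℝ)..(t / ε), φ s ≤ ε * ∫ _ in (0 : ℝ)..(t / ε), B := by
        gcongr
        exact intervalIntegral.integral_mono_on (by positivity) hφ intervalIntegrable_const hB
    _ = t * B := by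
        rw [intervalIntegral.integral_const, smul_eq_mul]
        field_simp
        ring

lemma le_mul_integral_div_of_le {φ : ℝ → ℝ} {ε t m : ℝ} (hε : 0 < ε) (ht : 0 ≤ t)
    (hφ : IntervalIntegrable φ volume 0 (t / ε)) (hm : ∀ s ∈ Icc 0 (t / ε), m ≤ φ s) :
    t * m ≤ ε * ∫ s in (0 : ℝ)..(t / ε), φ s := by
  have h := mul_integral_div_le_of_le hε ht hφ.neg fun s hs => neg_le_neg (hm s hs)
  simp only [Pi.neg_apply, intervalIntegral.integral_neg] at h
  linarith

/-- The costs of the admissible pairs of a control and a trajectory issued from `(x, y)`; the value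
function `valueFun` is their infimum. -/
def admissibleCosts {N M k : ℕ} (A : Set (Euc k))
    (f : Euc N → Euc M → Euc k → Euc N) (g : Euc N → Euc M → Euc k → Euc M)
    (ℓ : Euc N → Euc M → Euc k → ℝ) (u0 : Euc N → Euc M → ℝ)
    (ε : ℝ) (x : Euc N) (y : Euc M) (t : ℝ) : Set ℝ :=
  {v | ∃ (α : ℝ → Euc k) (ξ : ℝ → Euc N) (η : ℝ → Euc M),
    IsControl A α ∧ IsTrajectory f g ε α ξ η ∧ ξ 0 = x ∧ η 0 = y ∧
    IntervalIntegrable (fun s => ℓ (ξ s) (η s) (α s)) volume 0 (t / ε) ∧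
    v = ε * (∫ s in (0:ℝ)..(t / ε), ℓ (ξ s) (η s) (α s)) + u0 (ξ (t / ε)) (η (t / ε))}

variable {N M k : ℕ} {f : Euc N → Euc M → Euc k → Euc N} {g : Euc N → Euc M → Euc k → Euc M}
  {ℓ : Euc N → Euc M → Euc k → ℝ} {u0 : Euc N → Euc M → ℝ} {A : Set (Euc k)} {ε Q : ℝ}
  {x : Euc N} {y : Euc M} {t : ℝ}

lemma valueFun_eq_sInf_admissibleCosts :
    valueFun A f g ℓ u0 ε x y t = sInf (admissibleCosts A f g ℓ u0 ε x y t) :=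
  rfl

lemma le_of_mem_admissibleCosts (hε : 0 < ε) (ht : 0 ≤ t)
    (hfBdd : ∀ x y, ∀ a ∈ A, ‖f x y a‖ ≤ Q) {Rx m m₀ : ℝ} (hx : ‖x‖ + Q * t ≤ Rx)
    (hℓ : ∀ x ∈ closedBall (0 : Euc N) Rx, ∀ y, ∀ a ∈ A, m ≤ ℓ x y a)
    (hu0 : ∀ x ∈ closedBall (0 : Euc N) Rx, ∀ y, m₀ ≤ u0 x y) {v : ℝ}
    (hv : v ∈ admissibleCosts A f g ℓ u0 ε x y t) : t * m + m₀ ≤ v := by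
  obtain ⟨α, ξ, η, hα, htraj, rfl, -, hint, rfl⟩ := hv
  have hslow : ∀ s ∈ Icc 0 (t / ε), ξ s ∈ closedBall (0 : Euc N) Rx := by
    intro s hs
    have h := htraj.norm_slow_le hε.le hα hfBdd hs
    rw [show ε * (Q * (t / ε)) = Q * t by field_simp] at h
    exact mem_closedBall_zero_iff.2 (h.trans hx)
  refine add_le_add ?_ ?_
  · exact le_mul_integral_div_of_le hε ht hint fun s hs => hℓ _ (hslow s hs) _ _ (hα.2 s)
  · exact hu0 _ (hslow _ (right_mem_Icc.2 (by positivity))) _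

lemma exists_forall_exists_mem_admissibleCosts_le (hA : A.Nonempty) {C : NNReal}
    (hfLip : ∀ a ∈ A, LipschitzWith C fun z : Euc N × Euc M => f z.1 z.2 a)
    (hgLip : ∀ a ∈ A, LipschitzWith C fun z : Euc N × Euc M => g z.1 z.2 a)
    (hfBdd : ∀ x y, ∀ a ∈ A, ‖f x y a‖ ≤ Q)
    (hinward : ∀ x y, y ≠ 0 → ∃ a ∈ A, ⟪g x y a, y⟫ < 0)
    (hℓ : ∀ a ∈ A, Continuous fun z : Euc N × Euc M => ℓ z.1 z.2 a)
    (hu0 : Continuous fun z : Euc N × Euc M => u0 z.1 z.2) {R Rx : ℝ} (hR : 0 < R)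
    (hRx : 0 ≤ Rx) :
    ∃ B B₀ : ℝ, ∀ ε x y t, 0 < ε → 0 ≤ t → ‖x‖ + Q * t ≤ Rx → ‖y‖ ≤ R →
      ∃ v ∈ admissibleCosts A f g ℓ u0 ε x y t, v ≤ t * B + B₀ := by
  have hK : IsCompact (closedBall (0 : Euc N) Rx ×ˢ closedBall (0 : Euc M) R) :=
    (isCompact_closedBall 0 Rx).prod (isCompact_closedBall 0 R)
  obtain ⟨F, hFA, hF, ρ, hρ, hball⟩ := exists_finite_subset_forall_ball_subset hK
    (fun a ha => isOpen_inwardSet (R := R) (hgLip a ha).continuous)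
    (iUnion_inwardSet_eq_univ hA hR hinward ▸ subset_univ _)
  obtain ⟨B, hB⟩ := exists_forall_le_of_finite_of_isCompact hF hK fun a ha =>
    (hℓ a (hFA ha)).continuousOn
  obtain ⟨B₀, hB₀⟩ := hK.bddAbove_image hu0.continuousOn
  refine ⟨B, B₀, fun ε x y t hε ht hx hy => ?_⟩
  have hx' : ‖x‖ + ε * (Q * (t / ε)) ≤ Rx := by
    rwa [show ε * (Q * (t / ε)) = Q * t by field_simp]
  obtain ⟨α, γ, hα, htraj, hγ₀, hγ, hγK⟩ := exists_confined_trajectory hF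
    (fun a ha => hfLip a (hFA ha)) (fun a ha => hgLip a (hFA ha))
    (fun x y a ha => hfBdd x y a (hFA ha)) hρ hball hε.le hx' hRx hy
  have htε : 0 ≤ t / ε := by positivity
  have hint : IntervalIntegrable (fun s => ℓ (γ s).1 (γ s).2 (α s)) volume 0 (t / ε) :=
    intervalIntegrable_apply_curve (φ := fun z a => ℓ z.1 z.2 a) hF hα.1 hα.2
      (fun a ha => hℓ a (hFA ha)) hγ htε
  refine ⟨_, ⟨α, _, _, ⟨hα.1, fun s => hFA (hα.2 s)⟩, htraj, congrArg Prod.fst hγ₀,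
    congrArg Prod.snd hγ₀, hint, rfl⟩, ?_⟩
  refine add_le_add ?_ ?_
  · exact mul_integral_div_le_of_le hε ht hint fun s hs => hB _ (hα.2 s) _ (hγK s hs)
  · exact hB₀ ⟨_, hγK _ (right_mem_Icc.2 htε), rfl⟩

end Costs

section Hypotheses

lemma lipschitzWith_uncurry_of_norm_sub_le {X Y Z U : Type*} [SeminormedAddCommGroup X]
    [SeminormedAddCommGroup Y] [SeminormedAddCommGroup Z] {φ : X → Y → U → Z} {A : Set U} {L : ℝ}
    (hφ : ∀ x₁ x₂ y₁ y₂, ∀ a ∈ A, ‖φ x₁ y₁ a - φ x₂ y₂ a‖ ≤ L * (‖x₁ - x₂‖ + ‖y₁ - y₂‖)) :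
    ∀ a ∈ A, LipschitzWith (2 * L.toNNReal) fun z : X × Y => φ z.1 z.2 a := by
  refine fun a ha => LipschitzWith.of_dist_le_mul fun z w => ?_
  simp only [dist_eq_norm, NNReal.coe_mul, NNReal.coe_ofNat]
  calc ‖φ z.1 z.2 a - φ w.1 w.2 a‖ ≤ L * (‖z.1 - w.1‖ + ‖z.2 - w.2‖) := hφ _ _ _ _ a ha
    _ ≤ L.toNNReal * (‖z - w‖ + ‖z - w‖) := by
      gcongr
      · exact L.le_coe_toNNReal
      · exact norm_fst_le (z - w)
      · exact norm_snd_le (z - w)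
    _ = 2 * L.toNNReal * ‖z - w‖ := by ring

lemma exists_inner_neg_of_ball_subset_closure_convexHull {Y : Type*} [NormedAddCommGroup Y]
    [InnerProductSpace ℝ Y] {S : Set Y} {r : ℝ} (hr : 0 < r)
    (hS : ball 0 r ⊆ closure (convexHull ℝ S)) {y : Y} (hy : y ≠ 0) : ∃ v ∈ S, ⟪v, y⟫ < 0 := by
  by_contra! hnonneg
  have hconv : Convex ℝ {v : Y | 0 ≤ ⟪v, y⟫} := 
    convex_halfSpace_ge ((innerₗ Y).flip y).isLinear 0
  have hclosed : IsClosed {v : Y | 0 ≤ ⟪v, y⟫} :=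
    isClosed_le continuous_const (continuous_id.inner (𝕜 := ℝ) continuous_const)
  have hhalf : ball 0 r ⊆ {v : Y | 0 ≤ ⟪v, y⟫} :=
    hS.trans (closure_minimal (convexHull_min hnonneg hconv) hclosed)
  obtain ⟨τ, hτ, hτr⟩ := exists_pos_mul_lt hr ‖y‖
  have hmem : -(τ • y) ∈ ball (0 : Y) r := by
    rwa [mem_ball_zero_iff, norm_neg, norm_smul_of_nonneg hτ.le, mul_comm]
  have hle : 0 ≤ -(τ * ‖y‖ ^ 2) := by
    simpa only [mem_ofPred_eq, inner_neg_left, real_inner_smul_left, real_inner_self_eq_norm_sq]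
      using hhalf hmem
  have hpos : 0 < τ * ‖y‖ ^ 2 := by positivity
  linarith

lemma exists_inner_neg_of_locally_controllable {X Y U : Type*} [TopologicalSpace X]
    [NormedAddCommGroup Y] [InnerProductSpace ℝ Y] {g : X → Y → U → Y} {A : Set U}
    (hg : ∀ K : Set (X × Y), IsCompact K → ∃ r > 0, ∀ z ∈ K,
      ball (0 : Y) r ⊆ closure (convexHull ℝ ((fun a => g z.1 z.2 a) '' A))) (x : X) (y : Y)
    (hy : y ≠ 0) : ∃ a ∈ A, ⟪g x y a, y⟫ < 0 := by
  obtain ⟨r, hr, hball⟩ := hg {(x, y)} isCompact_singleton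
  simpa only [exists_mem_image] using
    exists_inner_neg_of_ball_subset_closure_convexHull hr (hball _ rfl) hy

lemma exists_forall_le_of_coercive {X Y U : Type*} [TopologicalSpace X]
    [SeminormedAddCommGroup Y] [ProperSpace Y] [TopologicalSpace U] {A : Set U} (hA : IsCompact A)
    {φ : X → Y → U → ℝ} (hφ : Continuous fun z : X × Y × U => φ z.1 z.2.1 z.2.2)
    (hcoer : ∀ B : Set X, IsCompact B → ∀ c : ℝ, ∃ R : ℝ,
      ∀ y, R < ‖y‖ → ∀ x ∈ B, ∀ a ∈ A, c < φ x y a) (B : Set X) (hB : IsCompact B) :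
    ∃ m, ∀ x ∈ B, ∀ y, ∀ a ∈ A, m ≤ φ x y a := by
  obtain ⟨R, hR⟩ := hcoer B hB 0
  obtain ⟨m, hm⟩ := (hB.prod ((isCompact_closedBall (0 : Y) R).prod hA)).bddBelow_image
    hφ.continuousOn
  refine ⟨min m 0, fun x hx y a ha => ?_⟩
  rcases le_or_gt ‖y‖ R with hy | hy
  · exact (min_le_left m 0).trans
      (hm ⟨(x, y, a), ⟨hx, mem_closedBall_zero_iff.2 hy, ha⟩, rfl⟩)
  · exact (min_le_right m 0).trans (hR y hy x hx a ha).le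

end Hypotheses

lemma abs_mul_add_le_of_mem_Icc {t R : ℝ} (ht : t ∈ Icc 0 R) (a b : ℝ) :
    |t * a + b| ≤ R * |a| + |b| := by
  calc |t * a + b| ≤ |t * a| + |b| := abs_add_le _ _
    _ = t * |a| + |b| := by rw [abs_mul, abs_of_nonneg ht.1]
    _ ≤ R * |a| + |b| := by gcongr; exact ht.2

theorem statement6_general {N M k : ℕ} {A : Set (Euc k)} (hA : A.Nonempty)
    {f : Euc N → Euc M → Euc k → Euc N} {g : Euc N → Euc M → Euc k → Euc M} {C : NNReal} {Q : ℝ}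
    (hfLip : ∀ a ∈ A, LipschitzWith C fun z : Euc N × Euc M => f z.1 z.2 a)
    (hgLip : ∀ a ∈ A, LipschitzWith C fun z : Euc N × Euc M => g z.1 z.2 a)
    (hfBdd : ∀ x y, ∀ a ∈ A, ‖f x y a‖ ≤ Q)
    (hinward : ∀ x y, y ≠ 0 → ∃ a ∈ A, ⟪g x y a, y⟫ < 0)
    {ℓ : Euc N → Euc M → Euc k → ℝ}
    (hℓCont : ∀ a ∈ A, Continuous fun z : Euc N × Euc M => ℓ z.1 z.2 a)
    (hℓBdd : ∀ B : Set (Euc N), IsCompact B → ∃ m, ∀ x ∈ B, ∀ y, ∀ a ∈ A, m ≤ ℓ x y a)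
    {u0 : Euc N → Euc M → ℝ} (hu0Cont : Continuous fun z : Euc N × Euc M => u0 z.1 z.2)
    (hu0Bdd : ∀ B : Set (Euc N), IsCompact B → ∃ m, ∀ x ∈ B, ∀ y, m ≤ u0 x y) :
    LocEquibounded (valueFun A f g ℓ u0) := by
  intro D hD
  obtain ⟨R, hR, hDR⟩ := hD.exists_pos_norm_le
  obtain ⟨a₀, ha₀⟩ := hA
  have hQ : 0 ≤ Q := (norm_nonneg _).trans (hfBdd 0 0 a₀ ha₀)
  obtain ⟨m, hm⟩ := hℓBdd _ (isCompact_closedBall 0 (R + Q * R))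
  obtain ⟨m₀, hm₀⟩ := hu0Bdd _ (isCompact_closedBall 0 (R + Q * R))
  obtain ⟨B, B₀, hB⟩ := exists_forall_exists_mem_admissibleCosts_le ⟨a₀, ha₀⟩ hfLip hgLip hfBdd
    hinward hℓCont hu0Cont hR (show 0 ≤ R + Q * R by positivity)
  refine ⟨max (R * |m| + |m₀|) (R * |B| + |B₀|), ?_⟩
  rintro ε hε ⟨x, y, t⟩ hz (ht : 0 ≤ t)
  obtain ⟨hx, hy, htR⟩ : ‖x‖ ≤ R ∧ ‖y‖ ≤ R ∧ |t| ≤ R := by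
    simpa only [norm_prod_le_iff, Real.norm_eq_abs] using hDR _ hz
  have htR' : t ∈ Icc 0 R := ⟨ht, (le_abs_self t).trans htR⟩
  have hxR : ‖x‖ + Q * t ≤ R + Q * R := by gcongr; exact htR'.2
  have hlower : ∀ v ∈ admissibleCosts A f g ℓ u0 ε x y t, t * m + m₀ ≤ v := fun v hv =>
    le_of_mem_admissibleCosts hε ht hfBdd hxR hm hm₀ hv
  obtain ⟨v, hv, hvB⟩ := hB ε x y t hε ht hxR hy
  rw [valueFun_eq_sInf_admissibleCosts, abs_le]
  constructor
  · exact (neg_le_of_abs_le ((abs_mul_add_le_of_mem_Icc htR' m m₀).trans (le_max_left _ _))).trans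
      (le_csInf ⟨v, hv⟩ hlower)
  · exact (csInf_le ⟨_, hlower⟩ hv).trans <| hvB.trans <| (le_abs_self _).trans <|
      (abs_mul_add_le_of_mem_Icc htR' B B₀).trans (le_max_right _ _)

theorem statement6
    {N M k : ℕ} (A : Set (Euc k)) (hA : IsCompact A) (hAne : A.Nonempty)
    (f : Euc N → Euc M → Euc k → Euc N) (g : Euc N → Euc M → Euc k → Euc M)
    (L0 Q0 : ℝ) (hL0 : 0 < L0) (hQ0 : 0 < Q0)
    (hfLip : ∀ (x₁ x₂ : Euc N) (y₁ y₂ : Euc M), ∀ a ∈ A,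
      ‖f x₁ y₁ a - f x₂ y₂ a‖ ≤ L0 * (‖x₁ - x₂‖ + ‖y₁ - y₂‖))
    (hgLip : ∀ (x₁ x₂ : Euc N) (y₁ y₂ : Euc M), ∀ a ∈ A,
      ‖g x₁ y₁ a - g x₂ y₂ a‖ ≤ L0 * (‖x₁ - x₂‖ + ‖y₁ - y₂‖))
    (hfBdd : ∀ x y, ∀ a ∈ A, ‖f x y a‖ ≤ Q0)
    (hctrl : ∀ K : Set (Euc N × Euc M), IsCompact K → ∃ r > 0, ∀ z ∈ K,
      Metric.ball (0 : Euc M) r ⊆ closure (convexHull ℝ ((fun a => g z.1 z.2 a) '' A)))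
    (ℓ : Euc N → Euc M → Euc k → ℝ)
    (hlCont : Continuous fun z : Euc N × Euc M × Euc k => ℓ z.1 z.2.1 z.2.2)
    (hlCoer : ∀ B : Set (Euc N), IsCompact B → ∀ c : ℝ, ∃ R : ℝ,
      ∀ y : Euc M, R < ‖y‖ → ∀ x ∈ B, ∀ a ∈ A, c < ℓ x y a)
    (u0 : Euc N → Euc M → ℝ)
    (hu0Cont : Continuous fun z : Euc N × Euc M => u0 z.1 z.2)
    (hu0Bdd : ∀ x y, -Q0 ≤ u0 x y)
 :
    LocEquibounded (valueFun A f g ℓ u0) := by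
  exact statement6_general hAne (lipschitzWith_uncurry_of_norm_sub_le hfLip)
    (lipschitzWith_uncurry_of_norm_sub_le hgLip) hfBdd
    (exists_inner_neg_of_locally_controllable hctrl)
    (fun a _ => hlCont.comp (continuous_fst.prodMk (continuous_snd.prodMk continuous_const)))
    (exists_forall_le_of_coercive hA hlCont hlCoer) hu0Cont fun _ _ => ⟨-Q0, fun x _ => hu0Bdd x⟩
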